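/- Let r_e, z_e, α : ℝ → ℝ be differentiable functions and define the exiting ray family F : ℝ³ → ℝ³ by F(h, φ, t) = (R(h,t)·cos φ, R(h,t)·sin φ, Z(h,t)), where R(h,t) = r_e(h) − t·sin(α(h)) and Z(h,t) = z_e(h) + t·cos(α(h)). Then the determinant of the Jacobian matrix of F with respect to (h, φ, t) (columns ∂F/∂h, ∂F/∂φ, ∂F/∂t in that order) factors as det(J_F)(h,φ,t) = R(h,t) · ( (∂R/∂h)(h,t)·cos(α(h)) + (∂Z/∂h)(h,t)·sin(α(h)) ) = R(h,t) · ( r_e'(h)·cos(α(h)) + z_e'(h)·sin(α(h)) − t·α'(h) ), for all (h, φ, t). -/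

import Mathlib

/-!
A meridian map `(h, t) ↦ (R, Z)` spun about the `z`-axis has, in the orthonormal frame
`(e_r, e_φ, e_z)`, the partial derivatives `(R_h, 0, Z_h)`, `(0, R, 0)` and `(R_t, 0, Z_t)`. The
frame is a rotation, so the Jacobian determinant is `R (R_h Z_t - R_t Z_h)`. Along a ray,
`(R_t, Z_t) = (-sin α, cos α)`; and since this direction is a unit vector, the contribution of `α'`
to `R_h cos α + Z_h sin α` collapses to `-t α'`.
-/

open Matrix Real

/-- Radial coordinate of the exiting ray: `R(h,t) = r_e(h) − t sin α(h)`. -/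
noncomputable def rayR (r_e α : ℝ → ℝ) (h t : ℝ) : ℝ := r_e h - t * Real.sin (α h)

/-- Axial coordinate of the exiting ray: `Z(h,t) = z_e(h) + t cos α(h)`. -/
noncomputable def rayZ (z_e α : ℝ → ℝ) (h t : ℝ) : ℝ := z_e h + t * Real.cos (α h)

/-- The exiting ray family `F(h,φ,t) = (R cos φ, R sin φ, Z)`. -/
noncomputable def rayF (r_e z_e α : ℝ → ℝ) (h φ t : ℝ) : Fin 3 → ℝ :=
  ![rayR r_e α h t * Real.cos φ, rayR r_e α h t * Real.sin φ, rayZ z_e α h t]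

/-- Jacobian determinant of `F` with respect to `(h, φ, t)`
(columns `∂F/∂h, ∂F/∂φ, ∂F/∂t`). -/
noncomputable def rayJdet (r_e z_e α : ℝ → ℝ) (h φ t : ℝ) : ℝ :=
  (Matrix.of fun i j : Fin 3 =>
    ![deriv (fun x => rayF r_e z_e α x φ t) h,
      deriv (fun x => rayF r_e z_e α h x t) φ,
      deriv (fun x => rayF r_e z_e α h φ x) t] j i).det

/-- The point with cylindrical coordinates `(ρ, φ, z)`, in Cartesian coordinates. Any real `ρ` is
allowed, since a ray continued past the axis has negative radial coordinate. -/
noncomputable def cylPoint (ρ φ z : ℝ) : Fin 3 → ℝ :=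
  ![ρ * cos φ, ρ * sin φ, z]

/-- The orthonormal frame of cylindrical coordinates at azimuth `φ`: the columns are
`e_r`, `e_φ`, `e_z`, so `cylFrame φ *ᵥ v` is the vector with components `v` in this frame. -/
noncomputable def cylFrame (φ : ℝ) : Matrix (Fin 3) (Fin 3) ℝ :=
  !![cos φ, -sin φ, 0;
     sin φ, cos φ, 0;
     0, 0, 1]

theorem det_cylFrame (φ : ℝ) : (cylFrame φ).det = 1 := by
  simp [cylFrame, det_fin_three, ← sq]

theorem hasDerivAt_cylPoint {ρ φ z : ℝ → ℝ} {ρ' φ' z' s : ℝ}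
    (hρ : HasDerivAt ρ ρ' s) (hφ : HasDerivAt φ φ' s) (hz : HasDerivAt z z' s) :
    HasDerivAt (fun x => cylPoint (ρ x) (φ x) (z x))
      (cylFrame (φ s) *ᵥ ![ρ', ρ s * φ', z']) s := by
  rw [hasDerivAt_pi]
  intro i
  fin_cases i
  · refine (hρ.mul hφ.cos).congr_deriv ?_
    simp [cylFrame, mulVec]
    ring
  · refine (hρ.mul hφ.sin).congr_deriv ?_
    simp [cylFrame, mulVec]
    ring
  · simpa [cylFrame, cylPoint, mulVec] using hz

theorem det_of_mulVec {n S : Type*} [Fintype n] [DecidableEq n] [CommRing S]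
    (A : Matrix n n S) (v : n → n → S) :
    (of fun i j => (A *ᵥ v j) i).det = A.det * (of fun i j => v j i).det :=
  det_mul A (of fun i j => v j i)

theorem det_jacobian_revolution {R Z : ℝ → ℝ → ℝ} {h t R_h R_t Z_h Z_t : ℝ}
    (hRh : HasDerivAt (fun x => R x t) R_h h) (hRt : HasDerivAt (fun x => R h x) R_t t)
    (hZh : HasDerivAt (fun x => Z x t) Z_h h) (hZt : HasDerivAt (fun x => Z h x) Z_t t) (φ : ℝ) :
    (of fun i j : Fin 3 =>
      ![deriv (fun x => cylPoint (R x t) φ (Z x t)) h,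
        deriv (fun x => cylPoint (R h t) x (Z h t)) φ,
        deriv (fun x => cylPoint (R h x) φ (Z h x)) t] j i).det =
      R h t * (R_h * Z_t - R_t * Z_h) := by
  let components : Fin 3 → Fin 3 → ℝ := ![![R_h, 0, Z_h], ![0, R h t, 0], ![R_t, 0, Z_t]]
  have partial_h : deriv (fun x => cylPoint (R x t) φ (Z x t)) h =
      cylFrame φ *ᵥ components 0 := by
    simpa [components] using (hasDerivAt_cylPoint hRh (hasDerivAt_const h φ) hZh).deriv
  have partial_φ : deriv (fun x => cylPoint (R h t) x (Z h t)) φ =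
      cylFrame φ *ᵥ components 1 := by
    simpa [components] using (hasDerivAt_cylPoint (hasDerivAt_const φ (R h t)) (hasDerivAt_id φ)
      (hasDerivAt_const φ (Z h t))).deriv
  have partial_t : deriv (fun x => cylPoint (R h x) φ (Z h x)) t =
      cylFrame φ *ᵥ components 2 := by
    simpa [components] using (hasDerivAt_cylPoint hRt (hasDerivAt_const t φ) hZt).deriv
  have columns : ![cylFrame φ *ᵥ components 0, cylFrame φ *ᵥ components 1,
      cylFrame φ *ᵥ components 2] = fun j => cylFrame φ *ᵥ components j := by
    ext j : 1
    fin_cases j <;> rfl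
  rw [partial_h, partial_φ, partial_t, columns, det_of_mulVec, det_cylFrame, one_mul]
  simp [components, det_fin_three]
  ring

section Ray

variable {r_e z_e α : ℝ → ℝ} {h t : ℝ}

theorem hasDerivAt_rayR_height {r' α' : ℝ} (hr : HasDerivAt r_e r' h) (hα : HasDerivAt α α' h)
    (t : ℝ) : HasDerivAt (fun x => rayR r_e α x t) (r' - t * (cos (α h) * α')) h :=
  hr.sub (hα.sin.const_mul t)

theorem hasDerivAt_rayZ_height {z' α' : ℝ} (hz : HasDerivAt z_e z' h) (hα : HasDerivAt α α' h)
    (t : ℝ) : HasDerivAt (fun x => rayZ z_e α x t) (z' + t * (-sin (α h) * α')) h :=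
  hz.add (hα.cos.const_mul t)

theorem hasDerivAt_rayR_distance (r_e α : ℝ → ℝ) (h t : ℝ) :
    HasDerivAt (fun x => rayR r_e α h x) (-sin (α h)) t :=
  (hasDerivAt_mul_const (sin (α h))).const_sub (r_e h)

theorem hasDerivAt_rayZ_distance (z_e α : ℝ → ℝ) (h t : ℝ) :
    HasDerivAt (fun x => rayZ z_e α h x) (cos (α h)) t :=
  (hasDerivAt_mul_const (cos (α h))).const_add (z_e h)

theorem rayJdet_eq_of_hasDerivAt {R_h Z_h : ℝ}
    (hR : HasDerivAt (fun x => rayR r_e α x t) R_h h)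
    (hZ : HasDerivAt (fun x => rayZ z_e α x t) Z_h h) (φ : ℝ) :
    rayJdet r_e z_e α h φ t = rayR r_e α h t * (R_h * cos (α h) + Z_h * sin (α h)) :=
  calc
    rayJdet r_e z_e α h φ t = rayR r_e α h t * (R_h * cos (α h) - -sin (α h) * Z_h) :=
      det_jacobian_revolution hR (hasDerivAt_rayR_distance r_e α h t)
        hZ (hasDerivAt_rayZ_distance z_e α h t) φ
    _ = rayR r_e α h t * (R_h * cos (α h) + Z_h * sin (α h)) := by ring

theorem deriv_rayR_mul_cos_add_deriv_rayZ_mul_sin (hr : DifferentiableAt ℝ r_e h)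
    (hz : DifferentiableAt ℝ z_e h) (hα : DifferentiableAt ℝ α h) (t : ℝ) :
    deriv (fun x => rayR r_e α x t) h * cos (α h) +
        deriv (fun x => rayZ z_e α x t) h * sin (α h) =
      deriv r_e h * cos (α h) + deriv z_e h * sin (α h) - t * deriv α h := by
  rw [(hasDerivAt_rayR_height hr.hasDerivAt hα.hasDerivAt t).deriv,
    (hasDerivAt_rayZ_height hz.hasDerivAt hα.hasDerivAt t).deriv]
  linear_combination -(t * deriv α h) * sin_sq_add_cos_sq (α h)

theorem ray_jacobian_factorization_general (hr : DifferentiableAt ℝ r_e h)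
    (hz : DifferentiableAt ℝ z_e h) (hα : DifferentiableAt ℝ α h) (φ t : ℝ) :
    rayJdet r_e z_e α h φ t =
      rayR r_e α h t *
        (deriv (fun x => rayR r_e α x t) h * cos (α h) +
          deriv (fun x => rayZ z_e α x t) h * sin (α h)) ∧
    rayJdet r_e z_e α h φ t =
      rayR r_e α h t *
        (deriv r_e h * cos (α h) + deriv z_e h * sin (α h) - t * deriv α h) := by
  have hR := (hasDerivAt_rayR_height hr.hasDerivAt hα.hasDerivAt t).differentiableAt.hasDerivAt
  have hZ := (hasDerivAt_rayZ_height hz.hasDerivAt hα.hasDerivAt t).differentiableAt.hasDerivAt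
  have factorization := rayJdet_eq_of_hasDerivAt hR hZ φ
  refine ⟨factorization, ?_⟩
  rw [factorization, deriv_rayR_mul_cos_add_deriv_rayZ_mul_sin hr hz hα t]

end Ray

/-- the Jacobian determinant of the exiting ray family factors as
`det J_F = R · (∂R/∂h · cos α + ∂Z/∂h · sin α)
        = R · (r_e' cos α + z_e' sin α − t α')`. -/
theorem ray_jacobian_factorization (r_e z_e α : ℝ → ℝ)
    (hr : Differentiable ℝ r_e) (hz : Differentiable ℝ z_e) (hα : Differentiable ℝ α) :
    ∀ h φ t : ℝ,
      rayJdet r_e z_e α h φ t =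
        rayR r_e α h t *
          (deriv (fun x => rayR r_e α x t) h * Real.cos (α h) +
            deriv (fun x => rayZ z_e α x t) h * Real.sin (α h)) ∧
      rayJdet r_e z_e α h φ t =
        rayR r_e α h t *
          (deriv r_e h * Real.cos (α h) + deriv z_e h * Real.sin (α h) -
            t * deriv α h) :=
  fun h φ t => ray_jacobian_factorization_general (hr h) (hz h) (hα h) φ t
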